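/- Let q be a complex number with 0 < |q| < 1. Then Σ_{m=0}^∞ (q^m/(q;q)_m) · Σ_{k=0}^{2m} [2m choose k]_q = ((q^3;q^3)_∞ / (q;q)_∞)^3. -/

import Mathlib

/-!
Write `c M i = [2M choose M - i]_q / (q;q)_M`, so that the left-hand side is `∑_m q^m ∑_i c m i`,
and let `E_n = ∑_{a+b=n} q^{3ab}`. The relation
`q^n (1 - q^{n+1}) (c (M+1) (n+1) - c M (n+1)) = q^M (c M n - q^{3(n+1)} c M (n+2))`
and the recurrence `E_{n+2} = 2 + q^{3(n+1)} E_n` combine, by summation by parts, to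
`∑_{m<M} q^m ∑_i c m i = ∑_{n<M} q^n (1 - q^{n+1}) E_n c M (n+1)`.
As `M → ∞` every `c M i` tends to `1 / (q;q)_∞^2`. The remaining series `∑_n q^n (1 - q^{n+1}) E_n`
collects a double series by antidiagonals; summed by rows the same double series is the bilateral
Lambert series `∑_{n∈ℤ} q^n / (1 - q^{3n+1})`, which Kronecker's formula evaluates as
`(q^3;q^3)_∞^3 / (q;q)_∞`. Kronecker's formula is the limit of a finite partial fraction expansion.
-/

open Finset

/-- Finite q-Pochhammer symbol `(a;q)_n`. -/
noncomputable def qPoch (a q : ℂ) (n : ℕ) : ℂ := ∏ j ∈ Finset.range n, (1 - a * q ^ j)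

/-- Infinite q-Pochhammer symbol `(a;q)_∞`. -/
noncomputable def qPochInf (a q : ℂ) : ℂ := ∏' j : ℕ, (1 - a * q ^ j)

/-- `1/(q;q)_a` with the convention that it is `0` for `a < 0`. -/
noncomputable def qFactInv (q : ℂ) (a : ℤ) : ℂ :=
  if 0 ≤ a then (qPoch q q a.toNat)⁻¹ else 0

/-- Gaussian binomial coefficient `[n choose k]_q`, zero unless `0 ≤ k ≤ n`. -/
noncomputable def qBinom (q : ℂ) (n k : ℤ) : ℂ :=
  if 0 ≤ k ∧ k ≤ n then qPoch q q n.toNat * qFactInv q k * qFactInv q (n - k) else 0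

open Filter Topology Polynomial

section Convergence

lemma tendsto_sum_mul_of_bounded {ι β R : Type*} [NormedRing R] [CompleteSpace R]
    {F : Filter ι} {c : β → R} (hc : Summable fun b => ‖c b‖) {w : ι → β → R} {C : ℝ}
    (hC : ∀ i b, ‖w i b‖ ≤ C) {l : R} (hw : ∀ b, Tendsto (fun i => w i b) F (𝓝 l))
    {s : ι → Finset β} (hs : Tendsto s F atTop) :
    Tendsto (fun i => ∑ b ∈ s i, c b * w i b) F (𝓝 ((∑' b, c b) * l)) := by
  rw [← hc.of_norm.tsum_mul_right l]
  have hcw (i : ι) : ∑ b ∈ s i, c b * w i b =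
      ∑' b, (s i : Set β).indicator (fun b => c b * w i b) b := by
    rw [← _root_.tsum_subtype (s i : Set β) fun b => c b * w i b]
    exact (Finset.tsum_subtype' (s i) fun b => c b * w i b).symm
  simp_rw [hcw]
  refine tendsto_tsum_of_dominated_convergence (hc.mul_right C) (fun b => ?_)
    (.of_forall fun i b => ?_)
  · refine ((hw b).const_mul (c b)).congr' ?_
    filter_upwards [hs.eventually_ge_atTop {b}] with i hi
    rw [Set.indicator_of_mem (mem_coe.mpr (singleton_subset_iff.mp hi))]
  · exact (norm_indicator_le_norm_self _ _).trans (norm_mul_le_of_le le_rfl (hC i b))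

lemma exists_norm_le_of_tendsto {E : Type*} [SeminormedAddCommGroup E] {u : ℕ → E} {l : E}
    (h : Tendsto u atTop (𝓝 l)) : ∃ C, ∀ n, ‖u n‖ ≤ C := by
  obtain ⟨C, hC⟩ := h.norm.bddAbove_range
  exact ⟨C, Set.forall_mem_range.mp hC⟩

lemma hasSum_sum_antidiagonal {α : Type*} [AddCommMonoid α] [TopologicalSpace α] [ContinuousAdd α]
    [RegularSpace α] {f : ℕ × ℕ → α} {s : α} (hf : HasSum f s) :
    HasSum (fun n => ∑ p ∈ antidiagonal n, f p) s :=
  (HasAntidiagonal.sigmaAntidiagonalEquivProd.hasSum_iff.mpr hf).sigma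
    fun n => (antidiagonal n).hasSum f

lemma sum_Icc_neg_eq_sum_range {α : Type*} [AddCommMonoid α] (f : ℤ → α) (N : ℕ) :
    ∑ i ∈ Icc (-N : ℤ) N, f i = ∑ k ∈ range (2 * N + 1), f (k - N) :=
  (Finset.sum_nbij (fun k : ℕ => (k : ℤ) - N)
    (fun k hk => by simp only [mem_range, mem_Icc] at hk ⊢; omega)
    (fun _ _ _ _ h => by simpa using h)
    (fun i hi => ⟨(i + N).toNat, by
      simp only [coe_Icc, Set.mem_Icc, coe_range, Set.mem_Iio] at hi ⊢
      omega⟩)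
    fun _ _ => rfl).symm

lemma tendsto_natCast_add_toNat (n : ℤ) : Tendsto (fun N : ℕ => (N + n).toNat) atTop atTop :=
  tendsto_atTop.mpr fun k => (eventually_ge_atTop (k + n.natAbs)).mono fun N hN => by omega

lemma tendsto_Icc_neg_atTop : Tendsto (fun N : ℕ => Icc (-N : ℤ) N) atTop atTop :=
  tendsto_atTop_finset_of_monotone (fun _ _ h => Icc_subset_Icc (by omega) (by omega))
    fun n => ⟨n.natAbs, mem_Icc.mpr (by omega)⟩

end Convergence

section Powers

variable {K : Type*} [NormedDivisionRing K] {a q : K}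

lemma norm_pow_lt_one (hq : ‖q‖ < 1) {n : ℕ} (hn : n ≠ 0) : ‖q ^ n‖ < 1 := by
  rw [norm_pow]
  exact pow_lt_one₀ (norm_nonneg q) hq hn

lemma mul_pow_ne_one_of_norm_lt_one (ha : ‖a‖ < 1) (hq : ‖q‖ < 1) (n : ℕ) : a * q ^ n ≠ 1 := by
  refine ne_of_apply_ne norm ?_
  rw [norm_mul, norm_pow, norm_one]
  exact (mul_lt_one_of_nonneg_of_lt_one_left (norm_nonneg a) ha
    (pow_le_one₀ (norm_nonneg q) hq.le)).ne

lemma ne_zero_of_injective_pow {M : Type*} [MonoidWithZero M] {x : M}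
    (hx : Function.Injective fun n : ℕ => x ^ n) : x ≠ 0 := by
  rintro rfl
  exact absurd (@hx 1 2 (by simp)) (by norm_num)

lemma injective_pow_of_norm_lt_one (hq0 : q ≠ 0) (hq : ‖q‖ < 1) :
    Function.Injective fun n : ℕ => q ^ n :=
  .of_comp (f := norm) (by
    simpa only [Function.comp_def, norm_pow] using
      pow_right_injective₀ (norm_pos_iff.mpr hq0) hq.ne)

lemma summable_norm_pow_div_sub (ha : ‖a‖ < 1) (hq : ‖q‖ < 1) {c : K} (hc : c ≠ 0) (d : K) :
    Summable fun n : ℕ => ‖a ^ n / (c - d * q ^ n)‖ := by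
  have hlim : Tendsto (fun n : ℕ => (c - d * q ^ n)⁻¹) atTop (𝓝 c⁻¹) := by
    simpa using (((tendsto_pow_atTop_nhds_zero_of_norm_lt_one hq).const_mul d).const_sub c).inv₀
      (by simpa using hc)
  obtain ⟨C, hC⟩ := exists_norm_le_of_tendsto hlim
  refine .of_nonneg_of_le (fun _ => norm_nonneg _) (fun n => ?_)
    ((summable_geometric_of_lt_one (norm_nonneg a) ha).mul_right C)
  rw [div_eq_mul_inv, norm_mul, norm_pow]
  exact mul_le_mul_of_nonneg_left (hC n) (by positivity)

end Powers

section QPochhammer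

variable {a q : ℂ}

lemma qPoch_add (a q : ℂ) (m n : ℕ) : qPoch a q (m + n) = qPoch a q m * qPoch (a * q ^ m) q n := by
  simp only [qPoch, prod_range_add, pow_add, mul_assoc]

lemma qPoch_succ (a q : ℂ) (n : ℕ) : qPoch a q (n + 1) = qPoch a q n * (1 - a * q ^ n) :=
  prod_range_succ _ _

lemma qPoch_ne_zero (ha : ∀ n : ℕ, a * q ^ n ≠ 1) (n : ℕ) : qPoch a q n ≠ 0 :=
  prod_ne_zero_iff.mpr fun j _ => sub_ne_zero.mpr (ha j).symm

lemma summable_norm_neg_mul_pow (a : ℂ) (hq : ‖q‖ < 1) :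
    Summable fun j : ℕ => ‖-(a * q ^ j)‖ := by
  simpa only [norm_neg, norm_mul, norm_pow] using
    (summable_geometric_of_lt_one (norm_nonneg q) hq).mul_left ‖a‖

lemma tendsto_qPoch (a : ℂ) (hq : ‖q‖ < 1) :
    Tendsto (fun n => qPoch a q n) atTop (𝓝 (qPochInf a q)) := by
  simpa only [qPochInf, Function.comp_def, qPoch, ← sub_eq_add_neg] using
    (multipliable_one_add_of_summable (summable_norm_neg_mul_pow a hq)).tendsto_prod_tprod_nat

lemma qPochInf_ne_zero (ha : ∀ n : ℕ, a * q ^ n ≠ 1) (hq : ‖q‖ < 1) : qPochInf a q ≠ 0 := by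
  simpa only [qPochInf, ← sub_eq_add_neg] using
    tprod_one_add_ne_zero_of_summable (f := fun j : ℕ => -(a * q ^ j))
      (fun j => by simpa only [← sub_eq_add_neg] using sub_ne_zero.mpr (ha j).symm)
      (summable_norm_neg_mul_pow a hq)

lemma exists_norm_qPoch_le (a : ℂ) (hq : ‖q‖ < 1) : ∃ C, ∀ n, ‖qPoch a q n‖ ≤ C :=
  exists_norm_le_of_tendsto (tendsto_qPoch a hq)

lemma exists_norm_inv_qPoch_le (ha : ∀ n : ℕ, a * q ^ n ≠ 1) (hq : ‖q‖ < 1) :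
    ∃ C, ∀ n, ‖(qPoch a q n)⁻¹‖ ≤ C :=
  exists_norm_le_of_tendsto ((tendsto_qPoch a hq).inv₀ (qPochInf_ne_zero ha hq))

lemma qPoch_mul_eq_prod (a q : ℂ) (r n : ℕ) :
    qPoch a q (r * n) = ∏ i ∈ range r, qPoch (a * q ^ i) (q ^ r) n := by
  induction n with
  | zero => simp [qPoch]
  | succ n ih =>
    simp only [mul_add_one, qPoch_add a q (r * n) r, ih, qPoch_succ, prod_mul_distrib]
    congr 1
    exact prod_congr rfl fun i _ => by ring

lemma qPochInf_eq_prod (a : ℂ) (hq : ‖q‖ < 1) {r : ℕ} (hr : r ≠ 0) :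
    qPochInf a q = ∏ i ∈ range r, qPochInf (a * q ^ i) (q ^ r) := by
  have hrn : Tendsto (fun n : ℕ => r * n) atTop atTop := tendsto_id.const_mul_atTop' (by omega)
  refine tendsto_nhds_unique ((tendsto_qPoch a hq).comp hrn) ?_
  simpa only [Function.comp_def, qPoch_mul_eq_prod] using
    tendsto_finsetProd (range r) fun i _ => tendsto_qPoch (a * q ^ i) (norm_pow_lt_one hq hr)

/-- Reversing a symbol `(u / q ^ N; q)_N` produces a triangular power of `q`, which cancels when two
such symbols are compared. -/
lemma qPoch_div_pow_mul (ha : a ≠ 0) (hq : q ≠ 0) {y : ℂ} (hy : y ≠ 0) (N : ℕ) :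
    qPoch (a * y / q ^ N) q N * qPoch (q / y) q N =
      a ^ N * (qPoch (q / (a * y)) q N * qPoch (y / q ^ N) q N) := by
  have reflect {u : ℂ} (hu : u ≠ 0) : qPoch (u / q ^ N) q N =
      (∏ j ∈ range N, -(u / q ^ (j + 1))) * qPoch (q / u) q N := by
    rw [qPoch, ← prod_range_reflect, qPoch, ← prod_mul_distrib]
    refine prod_congr rfl fun j hj => ?_
    obtain ⟨d, rfl⟩ := Nat.exists_eq_add_of_lt (mem_range.mp hj)
    rw [show j + d + 1 - 1 - j = d by omega]
    field_simp
    ring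
  rw [reflect (mul_ne_zero ha hy), reflect hy]
  simp only [mul_div_assoc a, ← mul_neg, prod_mul_distrib, prod_const, card_range]
  ring

end QPochhammer

section BilateralSeries

variable {a Q y : ℂ}

/-- The coefficient `(Q/a;Q)_k (a;Q)_l / ((Q;Q)_k (Q;Q)_l)`: up to the factor `a ^ k`, that of
`1 / (1 - z Q ^ k)` in the partial fraction expansion of `(az;Q)_{k+l} / (z;Q)_{k+l+1}`. -/
noncomputable def partialFractionCoeff (a Q : ℂ) (k l : ℕ) : ℂ :=
  qPoch (Q / a) Q k * qPoch a Q l / (qPoch Q Q k * qPoch Q Q l)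

lemma prod_range_erase {M : Type*} [CommMonoid M] (f : ℕ → M) (k l : ℕ) :
    ∏ j ∈ (range (k + l + 1)).erase k, f j =
      (∏ j ∈ range k, f j) * ∏ j ∈ range l, f (k + 1 + j) := by
  induction l with
  | zero => simp [range_add_one]
  | succ l ih =>
    rw [← add_assoc, range_add_one, erase_insert_of_ne (by omega), prod_insert (by simp), ih,
      prod_range_succ, add_right_comm k l 1, mul_left_comm, mul_comm (f _)]

lemma prod_sub_mul_pow {x : ℂ} (hx : x ≠ 0) (a Q : ℂ) (n : ℕ) :
    ∏ i ∈ range n, (x - a * Q ^ i) = x ^ n * qPoch (a / x) Q n := by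
  rw [qPoch, ← card_range n, ← prod_const, card_range, ← prod_mul_distrib]
  exact prod_congr rfl fun i _ => by field_simp

lemma nodalWeight_pow (hQ : Q ≠ 0) (k l : ℕ) :
    Lagrange.nodalWeight (range (k + l + 1)) (fun j : ℕ => Q ^ j) k =
      ((Q ^ k) ^ (k + l) * (qPoch (1 / Q ^ k) Q k * qPoch Q Q l))⁻¹ := by
  have hk : Q ^ k ≠ 0 := pow_ne_zero k hQ
  have low := prod_sub_mul_pow hk 1 Q k
  have high := prod_sub_mul_pow hk (Q ^ (k + 1)) Q l
  rw [pow_succ, mul_div_cancel_left₀ Q hk] at high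
  simp only [one_mul] at low
  simp only [Lagrange.nodalWeight, prod_inv_distrib, prod_range_erase, low, pow_add, pow_one, high]
  ring

lemma nodalWeight_pow_mul_qPoch (hQ : Function.Injective fun n : ℕ => Q ^ n) (ha : a ≠ 0)
    (k l : ℕ) :
    Lagrange.nodalWeight (range (k + l + 1)) (fun j : ℕ => Q ^ j) k *
      ((Q ^ k) ^ (k + l) * qPoch (a / Q ^ k) Q (k + l)) = a ^ k * partialFractionCoeff a Q k l := by
  have hQ0 := ne_zero_of_injective_pow hQ
  have hk : Q ^ k ≠ 0 := pow_ne_zero k hQ0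
  have hPQ (n : ℕ) : qPoch Q Q n ≠ 0 :=
    qPoch_ne_zero (fun j h => by simpa using @hQ (j + 1) 0 (by simpa [pow_succ'] using h)) n
  have hPk : qPoch (1 / Q ^ k) Q k ≠ 0 := by
    refine prod_ne_zero_iff.mpr fun j hj => sub_ne_zero.mpr fun h => ?_
    rw [one_div_mul_eq_div, eq_div_iff hk, one_mul] at h
    exact (mem_range.mp hj).ne' (hQ h)
  have hrefl := qPoch_div_pow_mul ha hQ0 one_ne_zero k
  simp only [mul_one, div_one] at hrefl
  rw [nodalWeight_pow hQ0, qPoch_add, div_mul_cancel₀ a hk, partialFractionCoeff]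
  have hPQk := hPQ k
  have hPQl := hPQ l
  field_simp
  linear_combination qPoch a Q l * hrefl

/-- Partial fractions in `z`, by Lagrange interpolation of `∏_{i<L} (X - a Q^i)` at the nodes `Q^k`,
evaluated at `X = 1/z`. -/
lemma sum_partialFractionCoeff (hQ : Function.Injective fun n : ℕ => Q ^ n) (ha : a ≠ 0) {z : ℂ}
    (hz : z ≠ 0) (L : ℕ) (hzQ : ∀ k ∈ range (L + 1), z * Q ^ k ≠ 1) :
    ∑ k ∈ range (L + 1), a ^ k / (1 - z * Q ^ k) * partialFractionCoeff a Q k (L - k) =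
      qPoch (a * z) Q L / qPoch z Q (L + 1) := by
  have hQ0 := ne_zero_of_injective_pow hQ
  set f : ℂ[X] := Lagrange.nodal (range L) fun i => a * Q ^ i
  have hdeg : f.degree < #(range (L + 1)) := by
    rw [Lagrange.degree_nodal, card_range, card_range]
    exact_mod_cast L.lt_succ_self
  have hnode : ∀ k ∈ range (L + 1), z⁻¹ ≠ Q ^ k := fun k hk h =>
    hzQ k hk (by rw [← h, mul_inv_cancel₀ hz])
  have heval := congrArg (eval z⁻¹) (Lagrange.eq_interpolate hQ.injOn hdeg)
  have hnodal := prod_sub_mul_pow (inv_ne_zero hz) 1 Q (L + 1)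
  simp only [one_mul, one_div, inv_inv] at hnodal
  rw [Lagrange.eval_interpolate_not_at_node _ hnode, Lagrange.eval_nodal, Lagrange.eval_nodal,
    prod_sub_mul_pow (inv_ne_zero hz), div_inv_eq_mul, hnodal] at heval
  have hterm : ∀ k ∈ range (L + 1),
      Lagrange.nodalWeight (range (L + 1)) (fun j : ℕ => Q ^ j) k * (z⁻¹ - Q ^ k)⁻¹ *
        eval (Q ^ k) f = z * (a ^ k / (1 - z * Q ^ k) * partialFractionCoeff a Q k (L - k)) := by
    intro k hk
    obtain ⟨l, rfl⟩ := Nat.exists_eq_add_of_le (mem_range_succ_iff.mp hk)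
    have hinv : (z⁻¹ - Q ^ k)⁻¹ = z / (1 - z * Q ^ k) := by
      rw [← inv_div]
      congr 1
      field_simp
    rw [Lagrange.eval_nodal, prod_sub_mul_pow (pow_ne_zero k hQ0), mul_right_comm,
      nodalWeight_pow_mul_qPoch hQ ha, hinv, Nat.add_sub_cancel_left]
    ring
  rw [sum_congr rfl hterm, ← mul_sum, pow_succ] at heval
  have hden : qPoch z Q (L + 1) ≠ 0 :=
    prod_ne_zero_iff.mpr fun k hk => sub_ne_zero.mpr (hzQ k hk).symm
  rw [eq_div_iff hden]
  field_simp at heval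
  rw [mul_comm a z, heval, mul_comm]
  exact congrArg _ (sum_congr rfl fun k _ => by ring)

lemma div_mul_pow_ne_one (hy : y ≠ 0) (hyQ : ∀ n : ℤ, y * Q ^ n ≠ 1) (n : ℕ) :
    Q / y * Q ^ n ≠ 1 := by
  intro h
  refine hyQ (-(n + 1 : ℕ)) ?_
  rw [div_mul_eq_mul_div, div_eq_one_iff_eq hy, ← pow_succ'] at h
  rw [zpow_neg, zpow_natCast, h, mul_inv_cancel₀ hy]

/-- The expansion `sum_partialFractionCoeff` with `L = 2N`, recentred at `z = y / Q^N`. -/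
lemma sum_Icc_partialFractionCoeff (hQ : Function.Injective fun n : ℕ => Q ^ n) (ha : a ≠ 0)
    (hy : y ≠ 0) (hyQ : ∀ n : ℤ, y * Q ^ n ≠ 1) (N : ℕ) :
    ∑ n ∈ Icc (-N : ℤ) N, a ^ n / (1 - y * Q ^ n) *
        partialFractionCoeff a Q (N + n).toNat (N - n).toNat =
      qPoch (a * y) Q N * qPoch (Q / (a * y)) Q N / (qPoch y Q (N + 1) * qPoch (Q / y) Q N) := by
  have hQ0 := ne_zero_of_injective_pow hQ
  have hN : Q ^ N ≠ 0 := pow_ne_zero N hQ0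
  have hshift (k : ℕ) : y / Q ^ N * Q ^ k = y * Q ^ ((k : ℤ) - N) := by
    rw [zpow_sub₀ hQ0, zpow_natCast, zpow_natCast]
    ring
  have hsum := sum_partialFractionCoeff hQ ha (div_ne_zero hy hN) (2 * N)
    fun k _ => by simpa only [hshift] using hyQ (k - N)
  have hterm : ∀ k ∈ range (2 * N + 1),
      a ^ ((k : ℤ) - N) / (1 - y * Q ^ ((k : ℤ) - N)) *
        partialFractionCoeff a Q (N + ((k : ℤ) - N)).toNat (N - ((k : ℤ) - N)).toNat =
      (a ^ N)⁻¹ * (a ^ k / (1 - y / Q ^ N * Q ^ k) * partialFractionCoeff a Q k (2 * N - k)) := by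
    intro k _
    rw [hshift, zpow_sub₀ ha, zpow_natCast, zpow_natCast,
      show (N + ((k : ℤ) - N)).toNat = k by omega,
      show (N - ((k : ℤ) - N)).toNat = 2 * N - k by omega]
    ring
  have hyN : qPoch y Q (N + 1) ≠ 0 := qPoch_ne_zero (fun n => mod_cast hyQ n) _
  have hyN' : qPoch (y / Q ^ N) Q N ≠ 0 :=
    qPoch_ne_zero (fun n => by simpa only [hshift] using hyQ (n - N)) _
  have hQy : qPoch (Q / y) Q N ≠ 0 := qPoch_ne_zero (div_mul_pow_ne_one hy hyQ) _
  rw [sum_Icc_neg_eq_sum_range, sum_congr rfl hterm, ← mul_sum, hsum, two_mul, add_assoc,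
    qPoch_add, qPoch_add, ← mul_div_assoc a, div_mul_cancel₀ _ hN, div_mul_cancel₀ _ hN]
  field_simp
  linear_combination qPoch (a * y) Q N * qPoch_div_pow_mul ha hQ0 hy N

lemma exists_norm_partialFractionCoeff_le (a : ℂ) (hQ : ‖Q‖ < 1) :
    ∃ C, ∀ k l, ‖partialFractionCoeff a Q k l‖ ≤ C := by
  obtain ⟨A, hA⟩ := exists_norm_qPoch_le (Q / a) hQ
  obtain ⟨B, hB⟩ := exists_norm_qPoch_le a hQ
  obtain ⟨D, hD⟩ := exists_norm_inv_qPoch_le (mul_pow_ne_one_of_norm_lt_one hQ hQ) hQ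
  refine ⟨A * B * (D * D), fun k l => ?_⟩
  rw [partialFractionCoeff, div_eq_mul_inv, mul_inv]
  exact norm_mul_le_of_le (norm_mul_le_of_le (hA k) (hB l)) (norm_mul_le_of_le (hD k) (hD l))

lemma tendsto_partialFractionCoeff (a : ℂ) (hQ : ‖Q‖ < 1) {ι : Type*} {F : Filter ι}
    {s t : ι → ℕ} (hs : Tendsto s F atTop) (ht : Tendsto t F atTop) :
    Tendsto (fun i => partialFractionCoeff a Q (s i) (t i)) F
      (𝓝 (qPochInf (Q / a) Q * qPochInf a Q / qPochInf Q Q ^ 2)) := by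
  have hQQ := qPochInf_ne_zero (mul_pow_ne_one_of_norm_lt_one hQ hQ) hQ
  rw [sq]
  exact (((tendsto_qPoch (Q / a) hQ).comp hs).mul ((tendsto_qPoch a hQ).comp ht)).div
    (((tendsto_qPoch Q hQ).comp hs).mul ((tendsto_qPoch Q hQ).comp ht)) (mul_ne_zero hQQ hQQ)

lemma summable_norm_zpow_div_one_sub (hQ : Q ≠ 0) (hQa : ‖Q‖ < ‖a‖) (ha : ‖a‖ < 1) (hy : y ≠ 0) :
    Summable fun n : ℤ => ‖a ^ n / (1 - y * Q ^ n)‖ := by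
  have hQ1 := hQa.trans ha
  have ha0 : a ≠ 0 := norm_pos_iff.mp ((norm_nonneg Q).trans_lt hQa)
  have hQa1 : ‖Q / a‖ < 1 := by rwa [norm_div, div_lt_one (norm_pos_iff.mpr ha0)]
  have hpos := summable_norm_pow_div_sub ha hQ1 one_ne_zero y
  have hneg := ((summable_nat_add_iff 1).mpr
    (summable_norm_pow_div_sub hQa1 hQ1 (neg_ne_zero.mpr hy) (-1)))
  refine .of_nat_of_neg_add_one (by simpa only [zpow_natCast] using hpos) (hneg.congr fun n => ?_)
  rw [show -((n : ℤ) + 1) = -((n + 1 : ℕ) : ℤ) by push_cast; ring, zpow_neg, zpow_neg,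
    zpow_natCast, zpow_natCast, div_pow]
  have hn : Q ^ (n + 1) ≠ 0 := pow_ne_zero _ hQ
  have hden : 1 - y * (Q ^ (n + 1))⁻¹ = (-y - -1 * Q ^ (n + 1)) / Q ^ (n + 1) := by
    field_simp
    ring
  rw [hden]
  congr 1
  field_simp

/-- Kronecker's theorem, the special case `b = Qy` of Ramanujan's `₁ψ₁` summation. -/
theorem tsum_zpow_div_one_sub (hQ : Q ≠ 0) (hQa : ‖Q‖ < ‖a‖) (ha : ‖a‖ < 1) (hy : y ≠ 0)
    (hyQ : ∀ n : ℤ, y * Q ^ n ≠ 1) :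
    ∑' n : ℤ, a ^ n / (1 - y * Q ^ n) =
      qPochInf Q Q ^ 2 * (qPochInf (a * y) Q * qPochInf (Q / (a * y)) Q) /
        (qPochInf a Q * qPochInf (Q / a) Q * (qPochInf y Q * qPochInf (Q / y) Q)) := by
  have hQ1 := hQa.trans ha
  have ha0 : a ≠ 0 := norm_pos_iff.mp ((norm_nonneg Q).trans_lt hQa)
  have hQa1 : ‖Q / a‖ < 1 := by rwa [norm_div, div_lt_one (norm_pos_iff.mpr ha0)]
  have hinj := injective_pow_of_norm_lt_one hQ hQ1
  have hQQ := qPochInf_ne_zero (mul_pow_ne_one_of_norm_lt_one hQ1 hQ1) hQ1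
  have hP := qPochInf_ne_zero (mul_pow_ne_one_of_norm_lt_one ha hQ1) hQ1
  have hP' := qPochInf_ne_zero (mul_pow_ne_one_of_norm_lt_one hQa1 hQ1) hQ1
  have hR := qPochInf_ne_zero (fun n => mod_cast hyQ n) hQ1
  have hR' := qPochInf_ne_zero (div_mul_pow_ne_one hy hyQ) hQ1
  obtain ⟨C, hC⟩ := exists_norm_partialFractionCoeff_le a hQ1
  have hlhs := tendsto_sum_mul_of_bounded
    (w := fun (N : ℕ) (n : ℤ) => partialFractionCoeff a Q (N + n).toNat (N - n).toNat)
    (summable_norm_zpow_div_one_sub hQ hQa ha hy) (fun _ _ => hC _ _)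
    (fun n => tendsto_partialFractionCoeff a hQ1 (tendsto_natCast_add_toNat n)
      (tendsto_natCast_add_toNat (-n)))
    tendsto_Icc_neg_atTop
  have hrhs := ((tendsto_qPoch (a * y) hQ1).mul (tendsto_qPoch (Q / (a * y)) hQ1)).div
    (((tendsto_qPoch y hQ1).comp (tendsto_add_atTop_nat 1)).mul (tendsto_qPoch (Q / y) hQ1))
    (mul_ne_zero hR hR')
  have hlim := tendsto_nhds_unique hlhs
    (hrhs.congr fun N => (sum_Icc_partialFractionCoeff hinj ha0 hy hyQ N).symm)
  field_simp at hlim ⊢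
  linear_combination hlim

end BilateralSeries

section SummationByParts

variable {R : Type*} [CommRing R]

/-- The sum of `t ^ (a * b)` over all `a + b = n`; these weights solve the recurrence
`antidiagonalPowSum_add_two`, which makes summation by parts collapse. -/
def antidiagonalPowSum (t : R) (n : ℕ) : R := ∑ p ∈ antidiagonal n, t ^ (p.1 * p.2)

lemma antidiagonalPowSum_zero (t : R) : antidiagonalPowSum t 0 = 1 := by
  simp [antidiagonalPowSum]

lemma antidiagonalPowSum_one (t : R) : antidiagonalPowSum t 1 = 2 := by
  simp [antidiagonalPowSum, Nat.antidiagonal_succ, one_add_one_eq_two]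

lemma antidiagonalPowSum_add_two (t : R) (n : ℕ) :
    antidiagonalPowSum t (n + 2) = 2 + t ^ (n + 1) * antidiagonalPowSum t n := by
  have hinner : ∀ p ∈ antidiagonal n,
      t ^ ((p.1 + 1) * (p.2 + 1)) = t ^ (n + 1) * t ^ (p.1 * p.2) := by
    intro p hp
    rw [← mem_antidiagonal.mp hp]
    ring
  simp only [antidiagonalPowSum, Nat.antidiagonal_succ_succ', sum_cons, sum_map,
    Function.Embedding.prodMap, Function.Embedding.coeFn_mk, Prod.map, Nat.succ_eq_add_one,
    mul_sum, zero_mul, mul_zero, pow_zero, sum_congr rfl hinner]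
  ring

lemma sum_antidiagonalPowSum_mul (t : R) (B : ℕ → R) (K : ℕ) :
    ∑ n ∈ range K, antidiagonalPowSum t n * (B n - t ^ (n + 1) * B (n + 2)) =
      B 0 + 2 * ∑ n ∈ range (K + 1), B (n + 1) -
        antidiagonalPowSum t K * B K - antidiagonalPowSum t (K + 1) * B (K + 1) := by
  induction K with
  | zero => simp [antidiagonalPowSum_zero, antidiagonalPowSum_one]
  | succ K ih =>
    rw [sum_range_succ, ih, sum_range_succ _ (K + 1), antidiagonalPowSum_add_two]
    ring

end SummationByParts

section CentralCoefficients

variable {q : ℂ}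

lemma qFactInv_of_neg {a : ℤ} (ha : a < 0) : qFactInv q a = 0 := if_neg ha.not_ge

lemma qFactInv_natCast (q : ℂ) (n : ℕ) : qFactInv q n = (qPoch q q n)⁻¹ := by
  simp [qFactInv]

lemma qFactInv_eq_mul (hq : ‖q‖ < 1) (a : ℤ) :
    qFactInv q a = (1 - q ^ (a + 1)) * qFactInv q (a + 1) := by
  obtain ha | rfl | ha := lt_trichotomy a (-1)
  · rw [qFactInv_of_neg (by omega), qFactInv_of_neg (by omega), mul_zero]
  · rw [qFactInv_of_neg (by omega)]
    simp
  · lift a to ℕ using by omega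
    have hne := qPoch_ne_zero (mul_pow_ne_one_of_norm_lt_one hq hq) (a + 1)
    rw [← Nat.cast_succ, qFactInv_natCast, qFactInv_natCast, zpow_natCast]
    rw [qPoch_succ, ← pow_succ'] at hne ⊢
    rw [mul_inv, mul_left_comm, mul_inv_cancel₀ (right_ne_zero_of_mul hne), mul_one]

lemma exists_norm_qFactInv_le (hq : ‖q‖ < 1) : ∃ C, ∀ a, ‖qFactInv q a‖ ≤ C := by
  obtain ⟨C, hC⟩ := exists_norm_inv_qPoch_le (mul_pow_ne_one_of_norm_lt_one hq hq) hq
  refine ⟨C, fun a => ?_⟩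
  rw [qFactInv]
  split_ifs
  · exact hC _
  · simpa only [norm_zero] using (norm_nonneg _).trans (hC 0)

lemma tendsto_qFactInv_natCast_add (hq : ‖q‖ < 1) (i : ℤ) :
    Tendsto (fun M : ℕ => qFactInv q (M + i)) atTop (𝓝 (qPochInf q q)⁻¹) := by
  have hne := qPochInf_ne_zero (mul_pow_ne_one_of_norm_lt_one hq hq) hq
  refine (((tendsto_qPoch q hq).inv₀ hne).comp (tendsto_natCast_add_toNat i)).congr' ?_
  filter_upwards [eventually_ge_atTop i.natAbs] with M hM
  exact (if_pos (by omega)).symm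

/-- The central Gaussian binomial coefficients `[2M choose M - i]_q / (q;q)_M`, indexed by the
distance `i` from the middle and extended by zero to `|i| > M`. -/
noncomputable def qCentral (q : ℂ) (M : ℕ) (i : ℤ) : ℂ :=
  qPoch q q (2 * M) / qPoch q q M * qFactInv q (M - i) * qFactInv q (M + i)

lemma qCentral_even (q : ℂ) (M : ℕ) : (qCentral q M).Even := fun i => by
  rw [qCentral, qCentral, sub_neg_eq_add, ← sub_eq_add_neg, mul_right_comm]

lemma qCentral_of_lt {M : ℕ} {i : ℤ} (hi : M < i) : qCentral q M i = 0 := by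
  rw [qCentral, qFactInv_of_neg (by omega), mul_zero, zero_mul]

lemma sum_qBinom_eq (hq : ‖q‖ < 1) (m : ℕ) :
    ∑ k ∈ range (2 * m + 1), qBinom q (2 * m) k =
      qPoch q q m * ∑ i ∈ Icc (-m : ℤ) m, qCentral q m i := by
  have hne := qPoch_ne_zero (mul_pow_ne_one_of_norm_lt_one hq hq) m
  rw [sum_Icc_neg_eq_sum_range, mul_sum]
  refine sum_congr rfl fun k hk => ?_
  rw [mem_range] at hk
  rw [qBinom, if_pos (by omega), qCentral, show (2 * (m : ℤ)).toNat = 2 * m by omega,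
    show (m : ℤ) - (k - m) = 2 * m - k by ring, show (m : ℤ) + (k - m) = k by ring]
  field_simp

lemma sum_antidiagonalPowSum_mul_qCentral (q t : ℂ) (M : ℕ) :
    ∑ n ∈ range (M + 1),
        antidiagonalPowSum t n * (qCentral q M n - t ^ (n + 1) * qCentral q M (n + 2)) =
      ∑ i ∈ Icc (-M : ℤ) M, qCentral q M i := by
  have hparts := sum_antidiagonalPowSum_mul t (fun n => qCentral q M n) (M + 1)
  push_cast at hparts
  rw [hparts, sum_range_succ _ (M + 1), sum_range_succ _ M, Nat.cast_succ,
    qCentral_of_lt (M := M) (i := M + 1) (by omega),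
    qCentral_of_lt (M := M) (i := M + 1 + 1) (by omega),
    sum_Icc_of_even_eq_range (qCentral_even q M), sum_range_succ' _ M]
  push_cast
  ring

/-- A Wilf–Zeilberger type relation: differences in `M` telescope in `n`, which makes the partial
sums over `m` in `sum_mul_qCentral` computable. -/
lemma qCentral_succ_sub (hq0 : q ≠ 0) (hq : ‖q‖ < 1) (M n : ℕ) :
    q ^ n * (1 - q ^ (n + 1)) * (qCentral q (M + 1) (n + 1) - qCentral q M (n + 1)) =
      q ^ M * (qCentral q M n - (q ^ 3) ^ (n + 1) * qCentral q M (n + 2)) := by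
  have hM := qPoch_ne_zero (mul_pow_ne_one_of_norm_lt_one hq hq) M
  have hM' : 1 - q * q ^ M ≠ 0 := sub_ne_zero.mpr (mul_pow_ne_one_of_norm_lt_one hq hq M).symm
  have hY : q ^ n ≠ 0 := pow_ne_zero n hq0
  have hlow₁ := qFactInv_eq_mul hq (M - (n + 1))
  have hlow₂ := qFactInv_eq_mul hq (M - (n + 2))
  have hhigh₁ := qFactInv_eq_mul hq (M + (n + 1))
  have hhigh₀ := qFactInv_eq_mul hq (M + n)
  rw [show (M - (n + 1) + 1 : ℤ) = M - n by ring, zpow_sub₀ hq0] at hlow₁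
  rw [show (M - (n + 2) + 1 : ℤ) = M - (n + 1) by ring, hlow₁, zpow_sub₀ hq0] at hlow₂
  rw [show (M + (n + 1) + 1 : ℤ) = M + (n + 2) by ring] at hhigh₁
  rw [show (M + n + 1 : ℤ) = M + (n + 1) by ring, hhigh₁] at hhigh₀
  simp only [qCentral, Nat.cast_succ, show (M + 1 - (n + 1) : ℤ) = M - n by ring,
    show (M + 1 + (n + 1) : ℤ) = M + (n + 2) by ring, hlow₁, hlow₂, hhigh₁, hhigh₀,
    mul_add_one 2 M, qPoch_succ]
  simp only [zpow_add₀ hq0, zpow_natCast, zpow_ofNat]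
  field_simp
  ring

lemma sum_mul_qCentral (hq0 : q ≠ 0) (hq : ‖q‖ < 1) (M : ℕ) :
    ∑ m ∈ range M, q ^ m * ∑ i ∈ Icc (-m : ℤ) m, qCentral q m i =
      ∑ n ∈ range M,
        q ^ n * (1 - q ^ (n + 1)) * antidiagonalPowSum (q ^ 3) n * qCentral q M (n + 1) := by
  induction M with
  | zero => rfl
  | succ M ih =>
    have hdiff (n : ℕ) : q ^ n * (1 - q ^ (n + 1)) * antidiagonalPowSum (q ^ 3) n *
          qCentral q (M + 1) (n + 1) =
        q ^ n * (1 - q ^ (n + 1)) * antidiagonalPowSum (q ^ 3) n * qCentral q M (n + 1) +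
          q ^ M * (antidiagonalPowSum (q ^ 3) n *
            (qCentral q M n - (q ^ 3) ^ (n + 1) * qCentral q M (n + 2))) := by
      linear_combination antidiagonalPowSum (q ^ 3) n * qCentral_succ_sub hq0 hq M n
    rw [sum_congr rfl fun n _ => hdiff n, sum_add_distrib, ← mul_sum,
      sum_antidiagonalPowSum_mul_qCentral, sum_range_succ, sum_range_succ _ M, ih,
      qCentral_of_lt (M := M) (i := M + 1) (by omega), mul_zero, add_zero]

lemma exists_norm_qCentral_le (hq : ‖q‖ < 1) : ∃ C, ∀ M i, ‖qCentral q M i‖ ≤ C := by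
  obtain ⟨A, hA⟩ := exists_norm_qPoch_le q hq
  obtain ⟨B, hB⟩ := exists_norm_inv_qPoch_le (mul_pow_ne_one_of_norm_lt_one hq hq) hq
  obtain ⟨D, hD⟩ := exists_norm_qFactInv_le hq
  refine ⟨A * B * D * D, fun M i => ?_⟩
  rw [qCentral, div_eq_mul_inv]
  exact norm_mul_le_of_le (norm_mul_le_of_le (norm_mul_le_of_le (hA _) (hB M)) (hD _)) (hD _)

lemma tendsto_qCentral (hq : ‖q‖ < 1) (i : ℤ) :
    Tendsto (fun M => qCentral q M i) atTop (𝓝 (qPochInf q q ^ 2)⁻¹) := by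
  have hne := qPochInf_ne_zero (mul_pow_ne_one_of_norm_lt_one hq hq) hq
  have hratio : Tendsto (fun M => qPoch q q (2 * M) / qPoch q q M) atTop (𝓝 1) := by
    rw [← div_self hne]
    exact ((tendsto_qPoch q hq).comp (tendsto_id.const_mul_atTop' two_pos)).div
      (tendsto_qPoch q hq) hne
  rw [sq, mul_inv, ← one_mul (_ * _), ← mul_assoc]
  exact (hratio.mul (tendsto_qFactInv_natCast_add hq (-i))).mul (tendsto_qFactInv_natCast_add hq i)

lemma summable_pow_mul_sum_qCentral (hq : ‖q‖ < 1) :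
    Summable fun m : ℕ => q ^ m * ∑ i ∈ Icc (-m : ℤ) m, qCentral q m i := by
  obtain ⟨C, hC⟩ := exists_norm_qCentral_le hq
  have hlin := (((summable_pow_mul_geometric_of_norm_lt_one 1 (r := ‖q‖) (by simpa)).mul_left
    2).add (summable_geometric_of_lt_one (norm_nonneg q) hq)).mul_right C
  refine .of_norm_bounded hlin fun m => ?_
  have hcard : ‖∑ i ∈ Icc (-m : ℤ) m, qCentral q m i‖ ≤ (2 * m + 1) * C := by
    refine (norm_sum_le_of_le _ fun i _ => hC m i).trans_eq ?_
    rw [sum_Icc_neg_eq_sum_range, sum_const, card_range, nsmul_eq_mul]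
    push_cast
    rfl
  refine (norm_mul_le_of_le (norm_pow q m).le hcard).trans_eq ?_
  ring

end CentralCoefficients

section DoubleSeries

variable {q : ℂ}

/-- The term at `(a, b)` of a double series whose antidiagonal sums carry the weights
`antidiagonalPowSum (q ^ 3)` and whose row sums form a bilateral Lambert series. -/
def lambertTerm (q : ℂ) (p : ℕ × ℕ) : ℂ :=
  q ^ (p.1 + p.2) * (1 - q ^ (p.1 + p.2 + 1)) * (q ^ 3) ^ (p.1 * p.2)

lemma sum_antidiagonal_lambertTerm (q : ℂ) (n : ℕ) :
    ∑ p ∈ antidiagonal n, lambertTerm q p =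
      q ^ n * (1 - q ^ (n + 1)) * antidiagonalPowSum (q ^ 3) n := by
  rw [antidiagonalPowSum, mul_sum]
  refine sum_congr rfl fun p hp => ?_
  rw [lambertTerm, mem_antidiagonal.mp hp]

lemma summable_lambertTerm (hq : ‖q‖ < 1) : Summable (lambertTerm q) := by
  have hgeom := summable_geometric_of_lt_one (norm_nonneg q) hq
  refine .of_norm_bounded ((hgeom.mul_of_nonneg hgeom (fun _ => by positivity)
    fun _ => by positivity).mul_right 2) fun p => ?_
  have hpow (n : ℕ) : ‖q ^ n‖ ≤ 1 := by
    rw [norm_pow]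
    exact pow_le_one₀ (norm_nonneg q) hq.le
  have hfactor : ‖1 - q ^ (p.1 + p.2 + 1)‖ ≤ 2 :=
    (norm_sub_le_of_le norm_one.le (hpow _)).trans_eq one_add_one_eq_two
  have hcube : ‖(q ^ 3) ^ (p.1 * p.2)‖ ≤ 1 := by simpa only [← pow_mul] using hpow _
  rw [lambertTerm, ← mul_one (_ * _ * 2), ← pow_add, ← norm_pow]
  exact norm_mul_le_of_le (norm_mul_le_of_le le_rfl hfactor) hcube

lemma hasSum_lambertTerm_row (hq : ‖q‖ < 1) (a : ℕ) :
    HasSum (fun b => lambertTerm q (a, b))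
      (q ^ a / (1 - q * (q ^ 3) ^ a) - q ^ (2 * a + 1) / (1 - q ^ 2 * (q ^ 3) ^ a)) := by
  have hratio {k : ℕ} (hk : k ≠ 0) : ‖q ^ k * (q ^ 3) ^ a‖ < 1 := by
    rw [← pow_mul, ← pow_add]
    exact norm_pow_lt_one hq (by omega)
  have hfst := (hasSum_geometric_of_norm_lt_one (hratio one_ne_zero)).mul_left (q ^ a)
  have hsnd := (hasSum_geometric_of_norm_lt_one (hratio two_ne_zero)).mul_left (q ^ (2 * a + 1))
  rw [pow_one] at hfst
  rw [div_eq_mul_inv, div_eq_mul_inv]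
  refine (hfst.sub hsnd).congr_fun fun b => ?_
  rw [lambertTerm]
  ring

lemma norm_cube_lt_norm (hq0 : q ≠ 0) (hq : ‖q‖ < 1) : ‖q ^ 3‖ < ‖q‖ := by
  rw [norm_pow]
  exact pow_lt_self_of_lt_one₀ (norm_pos_iff.mpr hq0) hq (by norm_num)

lemma hasSum_lambertTerm (hq0 : q ≠ 0) (hq : ‖q‖ < 1) :
    HasSum (lambertTerm q) (∑' n : ℤ, q ^ n / (1 - q * (q ^ 3) ^ n)) := by
  have hrows := (summable_lambertTerm hq).hasSum.prod_fiberwise (hasSum_lambertTerm_row hq)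
  have hlambert := (summable_norm_zpow_div_one_sub (pow_ne_zero 3 hq0)
    (norm_cube_lt_norm hq0 hq) hq hq0).of_norm.hasSum.nat_add_neg_add_one
  have hneg (n : ℕ) : q ^ (-(n + 1) : ℤ) / (1 - q * (q ^ 3) ^ (-(n + 1) : ℤ)) =
      -(q ^ (2 * n + 1) / (1 - q ^ 2 * (q ^ 3) ^ n)) := by
    have hden : 1 - q * ((q ^ 3) ^ (n + 1))⁻¹ =
        -(1 - q ^ 2 * (q ^ 3) ^ n) / (q ^ 2 * (q ^ 3) ^ n) := by
      field_simp
      ring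
    rw [← Nat.cast_add_one, zpow_neg, zpow_neg, zpow_natCast, zpow_natCast, hden,
      div_div_eq_mul_div, div_neg]
    congr 2
    field_simp
    ring
  convert (summable_lambertTerm hq).hasSum using 1
  refine hlambert.unique (hrows.congr_fun fun n => ?_)
  rw [hneg, zpow_natCast, zpow_natCast, sub_eq_add_neg (_ / _)]

lemma tsum_mul_antidiagonalPowSum (hq0 : q ≠ 0) (hq : ‖q‖ < 1) :
    ∑' n, q ^ n * (1 - q ^ (n + 1)) * antidiagonalPowSum (q ^ 3) n =
      qPochInf (q ^ 3) (q ^ 3) ^ 3 / qPochInf q q := by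
  have hcube_ne : ∀ n : ℤ, q * (q ^ 3) ^ n ≠ 1 := by
    intro n h
    rw [← zpow_natCast, ← zpow_mul, ← zpow_one_add₀ hq0] at h
    have hnorm := congrArg norm h
    rw [norm_zpow, norm_one, zpow_eq_one_iff_right₀ (norm_nonneg q) hq.ne] at hnorm
    omega
  have hcube_lt := norm_cube_lt_norm hq0 hq
  have hcube := hcube_lt.trans hq
  have hsum := (hasSum_sum_antidiagonal (hasSum_lambertTerm hq0 hq)).tsum_eq
  have hP₁ := qPochInf_ne_zero (mul_pow_ne_one_of_norm_lt_one hq hcube) hcube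
  have hP₂ := qPochInf_ne_zero (mul_pow_ne_one_of_norm_lt_one (norm_pow_lt_one hq two_ne_zero)
    hcube) hcube
  have hP₃ := qPochInf_ne_zero (mul_pow_ne_one_of_norm_lt_one hcube hcube) hcube
  simp only [sum_antidiagonal_lambertTerm] at hsum
  have hsplit : qPochInf q q =
      qPochInf q (q ^ 3) * qPochInf (q ^ 2) (q ^ 3) * qPochInf (q ^ 3) (q ^ 3) := by
    simp only [qPochInf_eq_prod q hq three_ne_zero, ← pow_succ', prod_range_succ, prod_range_zero,
      one_mul, zero_add, pow_one, Nat.reduceAdd]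
  rw [hsum, tsum_zpow_div_one_sub (pow_ne_zero 3 hq0) hcube_lt hq hq0 hcube_ne, hsplit, ← sq,
    show q ^ 3 / q ^ 2 = q by field_simp, show q ^ 3 / q = q ^ 2 by field_simp]
  field_simp

lemma tendsto_sum_mul_qCentral (hq : ‖q‖ < 1) :
    Tendsto (fun M => ∑ n ∈ range M,
        q ^ n * (1 - q ^ (n + 1)) * antidiagonalPowSum (q ^ 3) n * qCentral q M (n + 1))
      atTop (𝓝 ((∑' n, q ^ n * (1 - q ^ (n + 1)) * antidiagonalPowSum (q ^ 3) n) *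
        (qPochInf q q ^ 2)⁻¹)) := by
  obtain ⟨C, hC⟩ := exists_norm_qCentral_le hq
  have hweights := (hasSum_sum_antidiagonal (summable_lambertTerm hq).hasSum).summable.norm
  simp only [sum_antidiagonal_lambertTerm] at hweights
  exact tendsto_sum_mul_of_bounded (w := fun M (n : ℕ) => qCentral q M (n + 1)) hweights
    (fun _ _ => hC _ _) (fun n => tendsto_qCentral hq (n + 1)) tendsto_finset_range

end DoubleSeries

/-- `Σ_{m≥0} (q^m/(q;q)_m) Σ_{k=0}^{2m} [2m choose k]_q = ((q^3;q^3)_∞/(q;q)_∞)^3`. -/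
theorem statement2 (q : ℂ) (hq0 : 0 < ‖q‖) (hq1 : ‖q‖ < 1) :
    ∑' m : ℕ, q ^ m / qPoch q q m *
        ∑ k ∈ Finset.range (2 * m + 1), qBinom q (2 * (m : ℤ)) (k : ℤ)
      = (qPochInf (q ^ 3) (q ^ 3) / qPochInf q q) ^ 3 := by
  have hq : q ≠ 0 := norm_pos_iff.mp hq0
  have hterm (m : ℕ) : q ^ m / qPoch q q m * ∑ k ∈ range (2 * m + 1), qBinom q (2 * m) k =
      q ^ m * ∑ i ∈ Icc (-m : ℤ) m, qCentral q m i := by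
    rw [sum_qBinom_eq hq1, ← mul_assoc,
      div_mul_cancel₀ _ (qPoch_ne_zero (mul_pow_ne_one_of_norm_lt_one hq1 hq1) m)]
  have hpartial := (summable_pow_mul_sum_qCentral hq1).hasSum.tendsto_sum_nat
  simp only [sum_mul_qCentral hq hq1] at hpartial
  calc
    _ = ∑' m : ℕ, q ^ m * ∑ i ∈ Icc (-m : ℤ) m, qCentral q m i := tsum_congr hterm
    _ = _ := tendsto_nhds_unique hpartial (tendsto_sum_mul_qCentral hq1)
    _ = qPochInf (q ^ 3) (q ^ 3) ^ 3 / qPochInf q q * (qPochInf q q ^ 2)⁻¹ := by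
      rw [tsum_mul_antidiagonalPowSum hq hq1]
    _ = _ := by ring
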